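/- arXiv:1905.04337 — 3 statements merged into one kernel-verified Lean document; each statement's English description precedes it below -/
import Mathlib

section
/- Let s_1, s'_1 ∈ S^x determine two trajectories coupled by the same demand sequence. If I'_t ≥ I_t for all t ∈ {1, 2, …, L+1}, then s'_{L+1} = s_{L+1}; consequently s'_t = s_t, y'_t = y_t, and C'_t = C_t for all t ≥ L+1. -/
/-!
At 0-indexed time `L` every unit initially in the pipeline has arrived, so pipeline entry `i ≥ 1`
of the state is exactly the sales of time `i - 1` (`mrpTraj_pipeline`). Since inventory dominates
up to time `L`, so do the sales, and hence the state at time `L` of the second trajectory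
dominates that of the first in every coordinate. Both states have the same total `x`, because
a step preserves the sum of the entries (`sum_mrpStep`), so they are equal. Afterwards
the trajectories are driven by the same demands from the same state.
-/

open Finset

/-- One step of the base-stock Markov reward process: given state `s ∈ S^x`
(on-hand inventory `s 0` and pipeline `s 1, …, s L`) and demand `z`, the next
state is `(s 0 - min (s 0) z + s 1, s 2, …, s L, min (s 0) z)`. -/
noncomputable def mrpStep (L : ℕ) (s : Fin (L + 1) → ℝ) (z : ℝ) : Fin (L + 1) → ℝ :=
  fun i =>
    if (i : ℕ) = 0 then s 0 - min (s 0) z + s 1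
    else if h : (i : ℕ) = L then min (s 0) z
    else s ⟨(i : ℕ) + 1, by have := i.isLt; omega⟩

/-- The trajectory of the Markov reward process driven by the (0-indexed) demand
sequence `d`, started at `s₁`; `mrpTraj L d s₁ t` is the state at (1-indexed) time `t+1`. -/
noncomputable def mrpTraj (L : ℕ) (d : ℕ → ℝ) (s₁ : Fin (L + 1) → ℝ) : ℕ → Fin (L + 1) → ℝ
  | 0 => s₁
  | t + 1 => mrpStep L (mrpTraj L d s₁ t) (d t)

/-- Membership in the state space `S^x`: nonnegative entries summing to `x`. -/
def memS (L : ℕ) (x : ℝ) (s : Fin (L + 1) → ℝ) : Prop :=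
  (∀ i, 0 ≤ s i) ∧ ∑ i, s i = x

/-- On-hand inventory `I` at (0-indexed) time `t`. -/
noncomputable def onHand (L : ℕ) (d : ℕ → ℝ) (s₁ : Fin (L + 1) → ℝ) (t : ℕ) : ℝ :=
  mrpTraj L d s₁ t 0

/-- Sales `y = min(I, d)` at (0-indexed) time `t`. -/
noncomputable def sales (L : ℕ) (d : ℕ → ℝ) (s₁ : Fin (L + 1) → ℝ) (t : ℕ) : ℝ :=
  min (onHand L d s₁ t) (d t)

/-- Pseudo-cost `C = h (I - y) - p y` at (0-indexed) time `t`. -/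
noncomputable def pcost (L : ℕ) (h p : ℝ) (d : ℕ → ℝ) (s₁ : Fin (L + 1) → ℝ) (t : ℕ) : ℝ :=
  h * (onHand L d s₁ t - sales L d s₁ t) - p * sales L d s₁ t

/-- The dominance relation: `succeq L s' s` means `s' ⪰ s`, i.e. with
`δ i = s' i - s i`, there is `k ∈ {0, …, L-1}` with `δ i ≥ 0` for `i ≤ k`
and `δ i ≤ 0` for `k < i`. -/
def succeq (L : ℕ) (s' s : Fin (L + 1) → ℝ) : Prop :=
  ∃ k : ℕ, k < L ∧ (∀ i : Fin (L + 1), (i : ℕ) ≤ k → s i ≤ s' i) ∧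
    ∀ i : Fin (L + 1), k < (i : ℕ) → s' i ≤ s i


/-- A step moves sold units from the on-hand entry to the end of the pipeline, so the total is
conserved. -/
lemma sum_mrpStep (L : ℕ) (hL : 1 ≤ L) (s : Fin (L + 1) → ℝ) (z : ℝ) :
    ∑ i, mrpStep L s z i = ∑ i, s i := by
  obtain ⟨m, rfl⟩ : ∃ m, L = m + 1 := ⟨L - 1, by omega⟩
  have hzero : mrpStep (m + 1) s z 0 = s 0 - min (s 0) z + s 1 := by simp [mrpStep]
  have hlast : mrpStep (m + 1) s z (Fin.last m).succ = min (s 0) z := by simp [mrpStep]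
  have hmid : ∀ i : Fin m, mrpStep (m + 1) s z i.castSucc.succ = s i.succ.succ := by
    intro i
    have hi : (i : ℕ) ≠ m := i.isLt.ne
    simp only [mrpStep, Fin.val_succ, Fin.val_castSucc]
    rw [if_neg (by omega), dif_neg (by omega)]
    rfl
  rw [Fin.sum_univ_succ, Fin.sum_univ_castSucc, Fin.sum_univ_succ (f := s), Fin.sum_univ_succ]
  simp only [hzero, hlast, hmid, Fin.succ_zero_eq_one]
  ring

lemma sum_mrpTraj (L : ℕ) (hL : 1 ≤ L) (d : ℕ → ℝ) (s : Fin (L + 1) → ℝ) (t : ℕ) :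
    ∑ i, mrpTraj L d s t i = ∑ i, s i := by
  induction t with
  | zero => rfl
  | succ t ih => rw [mrpTraj, sum_mrpStep L hL, ih]

/-- Once `t` exceeds `L - i`, pipeline entry `i ≥ 1` holds the sales made `L + 1 - i` periods
earlier; the time index is given by the equation `i + t = L + 1 + k` to avoid truncated
subtraction. -/
lemma mrpTraj_pipeline (L : ℕ) (d : ℕ → ℝ) (s : Fin (L + 1) → ℝ) (t : ℕ) :
    ∀ (i : Fin (L + 1)) (k : ℕ), (i : ℕ) ≠ 0 → (i : ℕ) + t = L + 1 + k →
      mrpTraj L d s t i = sales L d s k := by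
  induction t with
  | zero =>
    intro i k _ hk
    have := i.isLt
    omega
  | succ t ih =>
    intro i k hi hk
    simp only [mrpTraj, mrpStep]
    rw [if_neg hi]
    split_ifs with hiL
    · obtain rfl : k = t := by omega
      rfl
    · exact ih _ k (by simp) (by simp only; omega)

/-- if `I'_t ≥ I_t` for the first `L+1` steps (0-indexed times
`0, …, L`), then the coupled trajectories coincide from (1-indexed) time `L+1`
on; consequently states, sales and pseudo-costs agree from then on. -/
theorem coupling_coalescence (L : ℕ) (hL : 1 ≤ L) (x : ℝ) (hx : 0 ≤ x)
    (h p : ℝ) (h0 : 0 ≤ h) (p0 : 0 ≤ p)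
    (d : ℕ → ℝ) (hd : ∀ t, 0 ≤ d t)
    (s₁ s₁' : Fin (L + 1) → ℝ) (hs₁ : memS L x s₁) (hs₁' : memS L x s₁')
    (hinv : ∀ t, t ≤ L → onHand L d s₁ t ≤ onHand L d s₁' t) :
    mrpTraj L d s₁' L = mrpTraj L d s₁ L ∧
    ∀ t, L ≤ t → mrpTraj L d s₁' t = mrpTraj L d s₁ t ∧
      sales L d s₁' t = sales L d s₁ t ∧
      pcost L h p d s₁' t = pcost L h p d s₁ t := by
  have hstate : mrpTraj L d s₁' L = mrpTraj L d s₁ L := by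
    have hle : ∀ i ∈ (univ : Finset (Fin (L + 1))), mrpTraj L d s₁ L i ≤ mrpTraj L d s₁' L i := by
      intro i _
      by_cases hi : (i : ℕ) = 0
      · obtain rfl : i = 0 := Fin.ext hi
        exact hinv L le_rfl
      · have hk : (i : ℕ) + L = L + 1 + ((i : ℕ) - 1) := by omega
        rw [mrpTraj_pipeline L d s₁ L i _ hi hk, mrpTraj_pipeline L d s₁' L i _ hi hk]
        exact min_le_min_right _ (hinv _ (by have := i.isLt; omega))
    have hsum : ∑ i, mrpTraj L d s₁ L i = ∑ i, mrpTraj L d s₁' L i := by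
      rw [sum_mrpTraj L hL, sum_mrpTraj L hL, hs₁.2, hs₁'.2]
    funext i
    exact ((sum_eq_sum_iff_of_le hle).1 hsum i (mem_univ i)).symm
  refine ⟨hstate, fun t ht => ?_⟩
  have hst : mrpTraj L d s₁' t = mrpTraj L d s₁ t := by
    induction t, ht using Nat.le_induction with
    | base => exact hstate
    | succ t _ ih => rw [mrpTraj, mrpTraj, ih]
  refine ⟨hst, ?_, ?_⟩
  · simp only [sales, onHand, hst]
  · simp only [pcost, sales, onHand, hst]
end

section
/- Fix δ ≥ 0 and run two trajectories coupled on the same demand sequence: one from s^1_1 := (x+δ, 0, …, 0) ∈ S^{x+δ} and one from s^2_1 := (x, 0, …, 0) ∈ S^x. Then for every t ≥ 1: (i) s^1_t(i) ≥ s^2_t(i) for every coordinate i ∈ {0, …, L}; (ii) 0 ≤ I^1_t − I^2_t ≤ δ and 0 ≤ y^1_t − y^2_t ≤ δ; and (iii) the pseudo-costs satisfy |C^1_t − C^2_t| ≤ max(h,p)·δ. -/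
/-!
Both the sales `min I z` and the leftover inventory `I - min I z` are nondecreasing in the on-hand
inventory `I`, so one step of the process is monotone for the coordinatewise order
(`mrpStep_mono`). Since the starting states are ordered, the trajectories stay ordered. A step only
moves units between coordinates, so the total inventory is conserved (`sum_mrpStep`): the
coordinatewise gaps between the two trajectories are nonnegative and always sum to `δ`, whence the
on-hand gap lies in `[0, δ]`. That gap splits as `u + v`, where `u` is the gap in leftover inventory
and `v` the gap in sales, both nonnegative; the difference of pseudo-costs is `h * u - p * v`, which
is bounded in absolute value by `max h p * (u + v)`.
-/

open Finset

/-- The base-stock starting state `(z, 0, …, 0)`. -/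
noncomputable def baseState (L : ℕ) (z : ℝ) : Fin (L + 1) → ℝ :=
  fun i => if (i : ℕ) = 0 then z else 0

lemma sub_min_mono {a b : ℝ} (hab : a ≤ b) (z : ℝ) : a - min a z ≤ b - min b z := by
  rcases le_total a z with h1 | h1 <;> rcases le_total b z with h2 | h2 <;>
    simp only [min_eq_left, min_eq_right, h1, h2] <;> linarith

lemma mrpStep_mono (L : ℕ) {s s' : Fin (L + 1) → ℝ} (hs : ∀ i, s i ≤ s' i) (z : ℝ)
    (i : Fin (L + 1)) : mrpStep L s z i ≤ mrpStep L s' z i := by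
  unfold mrpStep
  split_ifs
  · exact add_le_add (sub_min_mono (hs 0) z) (hs 1)
  · exact min_le_min_right z (hs 0)
  · exact hs _

lemma mrpTraj_mono (L : ℕ) (d : ℕ → ℝ) {s s' : Fin (L + 1) → ℝ} (hs : ∀ i, s i ≤ s' i) (t : ℕ) :
    ∀ i, mrpTraj L d s t i ≤ mrpTraj L d s' t i := by
  induction t with
  | zero => exact hs
  | succ t ih => exact mrpStep_mono L ih (d t)

lemma sum_baseState (L : ℕ) (z : ℝ) : ∑ i, baseState L z i = z := by
  simp [baseState]

/-- coupling the trajectories started from `(x+δ, 0, …, 0)` and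
`(x, 0, …, 0)` on the same demand sequence, at every time the first trajectory
dominates coordinatewise, the gaps in on-hand inventory and in sales lie in
`[0, δ]`, and the pseudo-costs differ by at most `max(h,p) δ`. -/
theorem base_stock_coupling (L : ℕ) (hL : 1 ≤ L)
    (h p : ℝ) (h0 : 0 ≤ h) (p0 : 0 ≤ p)
    (x δ : ℝ) (hx : 0 ≤ x) (hδ : 0 ≤ δ)
    (d : ℕ → ℝ) (hd : ∀ t, 0 ≤ d t) (t : ℕ) :
    (∀ i : Fin (L + 1),
      mrpTraj L d (baseState L x) t i ≤ mrpTraj L d (baseState L (x + δ)) t i) ∧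
    (0 ≤ onHand L d (baseState L (x + δ)) t - onHand L d (baseState L x) t ∧
      onHand L d (baseState L (x + δ)) t - onHand L d (baseState L x) t ≤ δ) ∧
    (0 ≤ sales L d (baseState L (x + δ)) t - sales L d (baseState L x) t ∧
      sales L d (baseState L (x + δ)) t - sales L d (baseState L x) t ≤ δ) ∧
    |pcost L h p d (baseState L (x + δ)) t - pcost L h p d (baseState L x) t|
      ≤ max h p * δ := by
  have hmono : ∀ i, mrpTraj L d (baseState L x) t i ≤ mrpTraj L d (baseState L (x + δ)) t i := by
    refine mrpTraj_mono L d (fun i => ?_) t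
    unfold baseState
    split_ifs <;> linarith
  have hsum : ∑ i, (mrpTraj L d (baseState L (x + δ)) t i - mrpTraj L d (baseState L x) t i)
      = δ := by
    rw [Finset.sum_sub_distrib, sum_mrpTraj L hL, sum_mrpTraj L hL, sum_baseState, sum_baseState]
    ring
  -- A single term of a sum of nonnegative gaps is at most the sum.
  have hgap : onHand L d (baseState L (x + δ)) t - onHand L d (baseState L x) t ≤ δ :=
    (Finset.single_le_sum (fun i _ => sub_nonneg.2 (hmono i)) (Finset.mem_univ 0)).trans_eq hsum
  have hI : onHand L d (baseState L x) t ≤ onHand L d (baseState L (x + δ)) t := hmono 0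
  have hy : sales L d (baseState L x) t ≤ sales L d (baseState L (x + δ)) t :=
    min_le_min_right _ hI
  have hrest : onHand L d (baseState L x) t - sales L d (baseState L x) t
      ≤ onHand L d (baseState L (x + δ)) t - sales L d (baseState L (x + δ)) t :=
    sub_min_mono hI (d t)
  refine ⟨hmono, ⟨by linarith, hgap⟩, ⟨by linarith, by linarith⟩, ?_⟩
  unfold pcost
  generalize onHand L d (baseState L (x + δ)) t = I₁ at *
  generalize onHand L d (baseState L x) t = I₂ at *
  generalize sales L d (baseState L (x + δ)) t = y₁ at *
  generalize sales L d (baseState L x) t = y₂ at *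
  have hu : 0 ≤ (I₁ - y₁) - (I₂ - y₂) := by linarith
  have hv : 0 ≤ y₁ - y₂ := by linarith
  have hhu : h * ((I₁ - y₁) - (I₂ - y₂)) ≤ max h p * δ :=
    mul_le_mul (le_max_left h p) (by linarith) hu (h0.trans (le_max_left h p))
  have hpv : p * (y₁ - y₂) ≤ max h p * δ :=
    mul_le_mul (le_max_right h p) (by linarith) hv (h0.trans (le_max_left h p))
  have hhu0 := mul_nonneg h0 hu
  have hpv0 := mul_nonneg p0 hv
  rw [abs_le]
  constructor <;> linarith
end

section
/- Let f : ℝ → ℝ be convex on [l, r] with w := r − l > 0, and set x_l := l + w/4, x_c := l + w/2, x_r := l + 3w/4. Let x* ∈ [l, r] satisfy f(x*) ≤ f(x) for all x ∈ [l, r]. Suppose ε ≥ 0 and the three values f(x_l), f(x_c), f(x_r) all lie within an interval of length at most 3ε (i.e., the maximum of the three minus the minimum of the three is at most 3ε). Then f(x) ≤ f(x*) + 12ε for each x ∈ {x_l, x_c, x_r}. -/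
/-!
A minimizer `x*` lies within one quarter-width `q = (r - l) / 4` of a test point `p` such that
the point `z` at distance `q` from `p`, on the side away from `x*`, is again a test point.
By convexity, the slope from `x*` to `p` is at most the slope from `p` to `z`, so
`f p - f x* ≤ t * (f z - f p) ≤ 3ε` with `t = |p - x*| / q ≤ 1`. Each of the three values is
within `3ε` of `f p`, hence at most `f x* + 6ε`.
-/

/-- The three-point inequality behind the bound, with `x = p - t * d` and `z = p + d` on opposite
sides of `p`. The sign of the step `d` is free, so the lemma covers both orientations. -/
lemma le_add_of_opposite_step {f : ℝ → ℝ} {s : Set ℝ} (hf : ConvexOn ℝ s f) {p d x δ : ℝ}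
    (hx : x ∈ s) (hz : p + d ∈ s) (t : ℝ) (ht0 : 0 ≤ t) (ht1 : t ≤ 1) (hxt : x = p - t * d)
    (hδ : 0 ≤ δ) (hstep : f (p + d) - f p ≤ δ) : f p ≤ f x + δ := by
  have h1t : 0 < 1 + t := by linarith
  have hconv := hf.2 hx hz (show 0 ≤ 1 / (1 + t) by positivity)
    (show 0 ≤ t / (1 + t) by positivity) (by field_simp)
  simp only [smul_eq_mul] at hconv
  have hp : 1 / (1 + t) * x + t / (1 + t) * (p + d) = p := by
    rw [hxt]; field_simp; ring
  rw [hp] at hconv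
  have hmul : (1 + t) * f p ≤ f x + t * f (p + d) := by
    calc (1 + t) * f p ≤ (1 + t) * (1 / (1 + t) * f x + t / (1 + t) * f (p + d)) := by gcongr
      _ = f x + t * f (p + d) := by field_simp
  nlinarith [mul_le_mul_of_nonneg_left hstep ht0, mul_le_mul_of_nonneg_right ht1 hδ]

/-- for `f` convex on `[l, r]` with `w = r - l > 0`, quartile test
points `x_l = l + w/4`, `x_c = l + w/2`, `x_r = l + 3w/4`, a minimizer `x*` of
`f` over `[l, r]`, and `ε ≥ 0`: if the three values `f x_l, f x_c, f x_r` lie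
within an interval of length at most `3ε` (their max minus their min is `≤ 3ε`),
then each of them is within `12ε` of the minimum value `f x*`. -/
theorem convex_quartile_bound (f : ℝ → ℝ) (l r : ℝ) (hf : ConvexOn ℝ (Set.Icc l r) f)
    (hw : 0 < r - l) (xs : ℝ) (hxs : xs ∈ Set.Icc l r)
    (hmin : ∀ y ∈ Set.Icc l r, f xs ≤ f y) (ε : ℝ) (hε : 0 ≤ ε)
    (hspread :
      max (max (f (l + (r - l) / 4)) (f (l + (r - l) / 2))) (f (l + 3 * (r - l) / 4)) -
        min (min (f (l + (r - l) / 4)) (f (l + (r - l) / 2))) (f (l + 3 * (r - l) / 4))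
      ≤ 3 * ε) :
    f (l + (r - l) / 4) ≤ f xs + 12 * ε ∧
    f (l + (r - l) / 2) ≤ f xs + 12 * ε ∧
    f (l + 3 * (r - l) / 4) ≤ f xs + 12 * ε := by
  obtain ⟨hl, hr⟩ := hxs
  obtain ⟨q, rfl⟩ : ∃ q, r = l + 4 * q := ⟨(r - l) / 4, by ring⟩
  have hq : 0 < q := by linarith
  rw [show l + (l + 4 * q - l) / 4 = l + q by ring,
    show l + (l + 4 * q - l) / 2 = l + 2 * q by ring,
    show l + 3 * (l + 4 * q - l) / 4 = l + 3 * q by ring] at *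
  have hmax1 := le_max_left (max (f (l + q)) (f (l + 2 * q))) (f (l + 3 * q))
  have hmax2 := le_max_right (max (f (l + q)) (f (l + 2 * q))) (f (l + 3 * q))
  have hmax3 := le_max_left (f (l + q)) (f (l + 2 * q))
  have hmax4 := le_max_right (f (l + q)) (f (l + 2 * q))
  have hmin1 := min_le_left (min (f (l + q)) (f (l + 2 * q))) (f (l + 3 * q))
  have hmin2 := min_le_right (min (f (l + q)) (f (l + 2 * q))) (f (l + 3 * q))
  have hmin3 := min_le_left (f (l + q)) (f (l + 2 * q))
  have hmin4 := min_le_right (f (l + q)) (f (l + 2 * q))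
  have key : f (l + q) ≤ f xs + 3 * ε ∨ f (l + 2 * q) ≤ f xs + 3 * ε ∨
      f (l + 3 * q) ≤ f xs + 3 * ε := by
    have hmem : xs ∈ Set.Icc l (l + 4 * q) := ⟨hl, hr⟩
    have hδ : 0 ≤ 3 * ε := by linarith
    -- One case per quarter of the interval containing the minimizer.
    rcases le_total xs (l + 2 * q) with h2 | h2
    · rcases le_total xs (l + q) with h1 | h1
      · left
        refine le_add_of_opposite_step hf (d := q) hmem ⟨by linarith, by linarith⟩
          ((l + q - xs) / q) (div_nonneg (by linarith) hq.le)
          ((div_le_one hq).2 (by linarith)) (by field_simp; ring) hδ ?_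
        rw [show l + q + q = l + 2 * q by ring]
        linarith
      · right; left
        refine le_add_of_opposite_step hf (d := q) hmem ⟨by linarith, by linarith⟩
          ((l + 2 * q - xs) / q) (div_nonneg (by linarith) hq.le)
          ((div_le_one hq).2 (by linarith)) (by field_simp; ring) hδ ?_
        rw [show l + 2 * q + q = l + 3 * q by ring]
        linarith
    · rcases le_total xs (l + 3 * q) with h3 | h3
      · right; left
        refine le_add_of_opposite_step hf (d := -q) hmem ⟨by linarith, by linarith⟩
          ((xs - (l + 2 * q)) / q) (div_nonneg (by linarith) hq.le)
          ((div_le_one hq).2 (by linarith)) (by field_simp; ring) hδ ?_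
        rw [show l + 2 * q + -q = l + q by ring]
        linarith
      · right; right
        refine le_add_of_opposite_step hf (d := -q) hmem ⟨by linarith, by linarith⟩
          ((xs - (l + 3 * q)) / q) (div_nonneg (by linarith) hq.le)
          ((div_le_one hq).2 (by linarith)) (by field_simp; ring) hδ ?_
        rw [show l + 3 * q + -q = l + 2 * q by ring]
        linarith
  rcases key with h | h | h <;> refine ⟨?_, ?_, ?_⟩ <;> linarith
end
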